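/- arXiv:2411.00182 — 5 statements merged into one kernel-verified Lean document; each statement's English description precedes it below -/
import Mathlib

section
/- For all x ∈ X, γ ∈ Γ and v ∈ H, the family (π_x(c·(μ·c))(U_μ(π_{μ⁻¹x}(c)(U_{μ⁻¹γ} v))))_{μ∈Γ} has only finitely many nonzero terms and is summable with sum π_x(c)(U_γ v). Equivalently, (π⋊Γ)(e) ∘ φ = φ, where φ(ξ)(x,γ) = π_x(c)(U_γ(ξ(γ⁻¹x))): the map φ takes values in the range of the Mishchenko projection. -/
/-!
By equivariance, `U_μ π_{μ⁻¹x}(c) U_{μ⁻¹γ} = π_x(μ·c) U_γ`, so the `μ`-th term is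
`π_x(c (μ·c)²) U_γ`. As `c` has compact support and the action is proper, only finitely many of the
functions `c (μ·c)²` are nonzero; they add up to `c` because `∑_μ (μ·c)² = 1`.
-/

section RightTranslate

variable {Γ Z R : Type*}

/-- The translate `γ·g` of a function `g` on `Z`, where `ρ z γ` stands for `zγ`. The right action is
an explicit function `ρ`, as `Z` carries no `MulAction` instance. -/
def rightTranslate (ρ : Z → Γ → Z) (γ : Γ) (g : Z → R) : Z → R := fun z => g (ρ z γ)

lemma hasSum_mul_rightTranslate_mul_rightTranslate
    [Semiring R] [TopologicalSpace R] [IsTopologicalSemiring R]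
    {ρ : Z → Γ → Z} {c : Z → R} (hc : ∀ z, HasSum (fun γ => c (ρ z γ) ^ 2) 1) :
    HasSum (fun γ => c * rightTranslate ρ γ c * rightTranslate ρ γ c) c :=
  Pi.hasSum.2 fun z => by
    simpa only [Pi.mul_apply, rightTranslate, pow_two, mul_one, mul_assoc]
      using (hc z).mul_left (c z)

variable [TopologicalSpace Z]

lemma continuous_rightTranslate [TopologicalSpace R] {ρ : Z → Γ → Z} {γ : Γ} {g : Z → R}
    (hρ_cont : Continuous fun z => ρ z γ) (hg : Continuous g) : Continuous (rightTranslate ρ γ g) :=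
  hg.comp hρ_cont

lemma hasCompactSupport_rightTranslate [Group Γ] [Zero R] {ρ : Z → Γ → Z} (hρ_one : ∀ z, ρ z 1 = z)
    (hρ_mul : ∀ z γ μ, ρ (ρ z γ) μ = ρ z (γ * μ)) (hρ_cont : ∀ γ, Continuous fun z => ρ z γ)
    (γ : Γ) {g : Z → R} (hg : HasCompactSupport g) : HasCompactSupport (rightTranslate ρ γ g) :=
  hg.comp_homeomorph
    { toFun := fun z => ρ z γ
      invFun := fun z => ρ z γ⁻¹
      left_inv := fun z => by simp only [hρ_mul, mul_inv_cancel, hρ_one]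
      right_inv := fun z => by simp only [hρ_mul, inv_mul_cancel, hρ_one]
      continuous_toFun := hρ_cont γ
      continuous_invFun := hρ_cont γ⁻¹ }

lemma finite_setOf_mul_rightTranslate_ne_zero [MulZeroClass R] {ρ : Z → Γ → Z}
    (hρ_proper : ∀ K L : Set Z, IsCompact K → IsCompact L → {γ | ∃ z ∈ K, ρ z γ ∈ L}.Finite)
    {f g : Z → R} (hf : HasCompactSupport f) (hg : HasCompactSupport g) :
    {γ | f * rightTranslate ρ γ g ≠ 0}.Finite := by
  refine (hρ_proper (tsupport f) (tsupport g) hf hg).subset fun γ hγ => ?_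
  obtain ⟨z, hz⟩ := Function.ne_iff.1 hγ
  exact ⟨z, subset_tsupport f (left_ne_zero_of_mul hz), subset_tsupport g (right_ne_zero_of_mul hz)⟩

end RightTranslate

open CompactlySupported in
lemma finite_support_and_hasSum_map_of_additive_on_compactlySupported
    {ι Z R A : Type*} [TopologicalSpace Z] [AddCommMonoid R] [TopologicalSpace R] [ContinuousAdd R]
    [T2Space R] [AddCommGroup A] [TopologicalSpace A] {p : (Z → R) → A}
    (hp : ∀ f g : Z → R, Continuous f → HasCompactSupport f →
      Continuous g → HasCompactSupport g → p (f + g) = p f + p g)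
    {f : ι → Z → R} {g : Z → R} (hf_cont : ∀ i, Continuous (f i))
    (hf_supp : ∀ i, HasCompactSupport (f i)) (hf_fin : f.support.Finite) (hfg : HasSum f g) :
    (fun i => p (f i)).support.Finite ∧ HasSum (fun i => p (f i)) (p g) := by
  let P : C_c(Z, R) →+ A := AddMonoidHom.mk' (fun f => p f) fun f g =>
    hp f g f.continuous f.hasCompactSupport g.continuous g.hasCompactSupport
  let F : ι → C_c(Z, R) := fun i => ⟨⟨f i, hf_cont i⟩, hf_supp i⟩
  have hf_zero : ∀ i ∉ hf_fin.toFinset, f i = 0 := fun i hi => by simpa using hi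
  have hp_zero : p 0 = 0 := map_zero P
  have hg : g = ⇑(∑ i ∈ hf_fin.toFinset, F i) := by
    rw [CompactlySupportedContinuousMap.coe_sum]
    exact hfg.unique (hasSum_sum_of_ne_finset_zero hf_zero)
  have hp_sum : p g = ∑ i ∈ hf_fin.toFinset, p (f i) := by
    rw [hg]
    exact map_sum P F _
  refine ⟨hf_fin.subset fun i => mt fun hi => (congrArg p hi).trans hp_zero, ?_⟩
  rw [hp_sum]
  exact hasSum_sum_of_ne_finset_zero fun i hi => by rw [hf_zero i hi, hp_zero]

lemma mul_map_mul_conj_mul_map_inv_mul {Γ A : Type*} [Group Γ] [Monoid A] (u : Γ →* A)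
    (a b : A) (μ γ : Γ) :
    a * u μ * (u μ⁻¹ * b * u μ) * u (μ⁻¹ * γ) = a * b * u γ := by
  have hμ : u μ * u μ⁻¹ = 1 := by rw [← map_mul, mul_inv_cancel, map_one]
  calc a * u μ * (u μ⁻¹ * b * u μ) * u (μ⁻¹ * γ)
      = a * (u μ * u μ⁻¹) * b * (u μ * u μ⁻¹) * u γ := by simp only [map_mul, mul_assoc]
    _ = a * b * u γ := by rw [hμ, mul_one, mul_one]

theorem mishchenko_projection_fixes_phi_general
    {Γ Z X R A : Type*} [Group Γ] [TopologicalSpace Z] [MulAction Γ X]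
    [Semiring R] [TopologicalSpace R] [IsTopologicalSemiring R] [T2Space R]
    [Ring A] [TopologicalSpace A]
    (ρ : Z → Γ → Z) (hρ_one : ∀ z, ρ z 1 = z)
    (hρ_mul : ∀ (z : Z) (γ μ : Γ), ρ (ρ z γ) μ = ρ z (γ * μ))
    (hρ_cont : ∀ γ : Γ, Continuous fun z => ρ z γ)
    (hρ_proper : ∀ K L : Set Z, IsCompact K → IsCompact L →
      {γ : Γ | ∃ z ∈ K, ρ z γ ∈ L}.Finite)
    (c : Z → R) (hc_cont : Continuous c) (hc_supp : HasCompactSupport c)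
    (hc_sum : ∀ z, HasSum (fun γ : Γ => c (ρ z γ) ^ 2) 1)
    (u : Γ →* A) (π : X → (Z → R) → A)
    (hπ_add : ∀ (x : X) (f g : Z → R), Continuous f → HasCompactSupport f →
      Continuous g → HasCompactSupport g → π x (f + g) = π x f + π x g)
    (hπ_mul : ∀ (x : X) (f g : Z → R), Continuous f → HasCompactSupport f →
      Continuous g → HasCompactSupport g → π x (f * g) = π x f * π x g)
    (hπ_equiv : ∀ (γ : Γ) (x : X) (f : Z → R), Continuous f → HasCompactSupport f →
      π (γ • x) f = u γ * π x (rightTranslate ρ γ⁻¹ f) * u γ⁻¹)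
    (x : X) (γ : Γ) :
    {μ : Γ | π x (c * rightTranslate ρ μ c) * u μ * π (μ⁻¹ • x) c * u (μ⁻¹ * γ) ≠ 0}.Finite ∧
      HasSum (fun μ : Γ => π x (c * rightTranslate ρ μ c) * u μ * π (μ⁻¹ • x) c * u (μ⁻¹ * γ))
        (π x c * u γ) := by
  have hcont μ : Continuous (rightTranslate ρ μ c) := continuous_rightTranslate (hρ_cont μ) hc_cont
  have hsupp μ : HasCompactSupport (rightTranslate ρ μ c) :=
    hasCompactSupport_rightTranslate hρ_one hρ_mul hρ_cont μ hc_supp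
  have hterm μ : π x (c * rightTranslate ρ μ c) * u μ * π (μ⁻¹ • x) c * u (μ⁻¹ * γ) =
      π x (c * rightTranslate ρ μ c * rightTranslate ρ μ c) * u γ := by
    rw [hπ_equiv μ⁻¹ x c hc_cont hc_supp, inv_inv, mul_map_mul_conj_mul_map_inv_mul,
      hπ_mul x _ _ (hc_cont.mul (hcont μ)) (hsupp μ).mul_left (hcont μ) (hsupp μ)]
  have hfin : (fun μ => c * rightTranslate ρ μ c * rightTranslate ρ μ c).support.Finite :=
    (finite_setOf_mul_rightTranslate_ne_zero hρ_proper hc_supp hc_supp).subset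
      fun μ hμ => left_ne_zero_of_mul hμ
  simp only [hterm]
  exact finite_support_and_hasSum_map_of_additive_on_compactlySupported (p := fun f => π x f * u γ)
    (fun f g hf hf' hg hg' => by rw [hπ_add x f g hf hf' hg hg', add_mul])
    (fun μ => (hc_cont.mul (hcont μ)).mul (hcont μ)) (fun μ => (hsupp μ).mul_left)
    hfin (hasSum_mul_rightTranslate_mul_rightTranslate hc_sum)

/-- For every `x ∈ X`, `γ ∈ Γ` and `v ∈ H`, the family
`(π_x(c·(μ·c))(U_μ(π_{μ⁻¹x}(c)(U_{μ⁻¹γ} v))))_μ` has finite support and is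
summable with sum `π_x(c)(U_γ v)`; i.e. `(π⋊Γ)(e) ∘ φ = φ`: the map `φ` takes
values in the range of the Mishchenko projection. -/
theorem mishchenko_projection_fixes_phi
    {Γ : Type*} [Group Γ]
    {Z : Type*} [TopologicalSpace Z] [LocallyCompactSpace Z] [T2Space Z]
    {X : Type*} [TopologicalSpace X] [CompactSpace X] [T2Space X] [MulAction Γ X]
    {H : Type*} [NormedAddCommGroup H] [InnerProductSpace ℂ H] [CompleteSpace H]
    (ρ : Z → Γ → Z)
    (hρ_one : ∀ z, ρ z 1 = z)
    (hρ_mul : ∀ (z : Z) (γ μ : Γ), ρ (ρ z γ) μ = ρ z (γ * μ))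
    (hρ_cont : ∀ γ : Γ, Continuous fun z => ρ z γ)
    (hρ_proper : ∀ K L : Set Z, IsCompact K → IsCompact L →
      {γ : Γ | ∃ z ∈ K, ρ z γ ∈ L}.Finite)
    (hX_cont : ∀ γ : Γ, Continuous fun x : X => γ • x)
    (c : Z → ℝ) (hc_cont : Continuous c) (hc_supp : HasCompactSupport c)
    (hc_mem : ∀ z, c z ∈ Set.Icc (0 : ℝ) 1)
    (hc_sum : ∀ z, HasSum (fun γ : Γ => c (ρ z γ) ^ 2) 1)
    (U : Γ →* (H ≃ₗᵢ[ℂ] H))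
    (π : X → (Z → ℂ) → (H →L[ℂ] H))
    (hπ_add : ∀ (x : X) (f g : Z → ℂ), Continuous f → HasCompactSupport f →
      Continuous g → HasCompactSupport g → π x (f + g) = π x f + π x g)
    (hπ_mul : ∀ (x : X) (f g : Z → ℂ), Continuous f → HasCompactSupport f →
      Continuous g → HasCompactSupport g → π x (f * g) = (π x f).comp (π x g))
    (hπ_star : ∀ (x : X) (f : Z → ℂ), Continuous f → HasCompactSupport f →
      π x (fun z => (starRingEnd ℂ) (f z)) = ContinuousLinearMap.adjoint (π x f))
    (hπ_equiv : ∀ (γ : Γ) (x : X) (f : Z → ℂ) (v : H),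
      π (γ • x) f v = U γ (π x (fun z => f (ρ z γ⁻¹)) (U γ⁻¹ v))) :
    ∀ (x : X) (γ : Γ) (v : H),
      {μ : Γ | π x (fun z => (c z : ℂ) * (c (ρ z μ) : ℂ))
          (U μ (π (μ⁻¹ • x) (fun z => (c z : ℂ)) (U (μ⁻¹ * γ) v))) ≠ 0}.Finite ∧
      HasSum (fun μ : Γ =>
          π x (fun z => (c z : ℂ) * (c (ρ z μ) : ℂ))
            (U μ (π (μ⁻¹ • x) (fun z => (c z : ℂ)) (U (μ⁻¹ * γ) v))))
        (π x (fun z => (c z : ℂ)) (U γ v)) := by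
  intro x γ v
  let u : Γ →* (H →L[ℂ] H) :=
    (unitary (H →L[ℂ] H)).subtype.comp (Unitary.linearIsometryEquiv.symm.toMonoidHom.comp U)
  obtain ⟨hfin, hsum⟩ := mishchenko_projection_fixes_phi_general ρ hρ_one hρ_mul hρ_cont hρ_proper
    (fun z => (c z : ℂ)) (Complex.continuous_ofReal.comp hc_cont)
    (hc_supp.comp_left (g := ((↑) : ℝ → ℂ)) Complex.ofReal_zero)
    (fun z => by simpa using Complex.hasSum_ofReal.2 (hc_sum z))
    u π hπ_add hπ_mul (fun γ x f _ _ => ContinuousLinearMap.ext (hπ_equiv γ x f)) x γ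
  exact ⟨hfin.subset fun μ hμ h => hμ (DFunLike.congr_fun h v),
    hsum.mapL (ContinuousLinearMap.apply ℂ H v)⟩
end

section
/- For every Γ-invariant function ζ : X×Γ → H (i.e. ζ(γ₀x, γ₀γ) = U_{γ₀}(ζ(x,γ))), every x ∈ X and γ ∈ Γ, the family (π'_x(μ·c)(U'_μ(π'_{μ⁻¹x}(c)(V_{μ⁻¹x}(ζ(μ⁻¹x, μ⁻¹γ))))))_{μ∈Γ} is summable in H' with sum V_x(ζ(x,γ)). Equivalently, 𝒫' ∘ ((π'(c)∘V)⋊Γ) = V⋊Γ on Γ-invariant functions, whence 𝒫' ∘ ((π'(c)V)⋊Γ) ∘ 𝒫 = (V⋊Γ) ∘ 𝒫 (the key relation in the construction of the unitary W between Connes–Skandalis modules for two equivariant representations). -/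
/-- The averaging map `𝒫`: `𝒫ξ̂(x,γ) = ∑_μ π_x(μ·c)(U_μ(ξ̂(μ⁻¹x, μ⁻¹γ)))`. -/
noncomputable def avgP {Γ X Z H : Type*} [Group Γ] [MulAction Γ X]
    [NormedAddCommGroup H] [InnerProductSpace ℂ H]
    (π : X → (Z → ℂ) → (H →L[ℂ] H)) (U : Γ →* (H ≃ₗᵢ[ℂ] H))
    (ρ : Z → Γ → Z) (c : Z → ℝ) (ξ : X → Γ → H) (x : X) (γ : Γ) : H :=
  ∑' μ : Γ, π x (fun z => (c (ρ z μ) : ℂ)) (U μ (ξ (μ⁻¹ • x) (μ⁻¹ * γ)))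

/-!
On a `Γ`-invariant function `ζ`, equivariance lets `μ` be moved to the right through `π'` and `V`,
so the `μ`-th term of `𝒫'(π'(c) V ζ)` at `(x, γ)` becomes `π'_x(μ·c) π'_x(μ·c) V_x ζ(x, γ)`, and
nondegeneracy says that the operators `π'_x(μ·c)²` sum strongly to the identity. The second claim
is the case `ζ = 𝒫ξ`, since averages are invariant.
-/

open scoped CompactlySupported

section Averaging

variable {Γ X A E F : Type*} [Group Γ] [MulAction Γ X] [MulAction Γ A]

/-- `Γ`-invariance of a function on `X × Γ` (in curried form) with values in a `Γ`-set. -/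
def IsInvariantFunction [SMul Γ E] (ζ : X → Γ → E) : Prop :=
  ∀ (γ₀ : Γ) (x : X) (γ : Γ), ζ (γ₀ • x) (γ₀ * γ) = γ₀ • ζ x γ

variable (Γ) in
/-- `Γ`-equivariance of a family `V = (V_x)` of maps between two `Γ`-sets, written as
`V_{γx} = γ ∘ V_x ∘ γ⁻¹`. -/
def IsEquivariantFamily [SMul Γ E] [SMul Γ F] (V : X → E → F) : Prop :=
  ∀ (γ : Γ) (x : X) (v : E), V (γ • x) v = γ • V x (γ⁻¹ • v)

variable (Γ) in
/-- `Γ`-equivariance of a family `π = (π_x)` that lets the elements of a `Γ`-set `A`, in the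
application `C_c(Z)`, operate on `E`, written as `π_{γx}(a) = γ ∘ π_x(γ⁻¹·a) ∘ γ⁻¹`. -/
def IsCovariantFamily [SMul Γ E] (π : X → A → E → E) : Prop :=
  ∀ (γ : Γ) (x : X) (a : A) (v : E), π (γ • x) a v = γ • π x (γ⁻¹ • a) (γ⁻¹ • v)

/-- The `μ`-th term `π_x(μ·c)(μ ξ(μ⁻¹x, μ⁻¹γ))` of the average of `ξ` along `c` at `(x, γ)`. -/
def avgTerm [SMul Γ E] (π : X → A → E → E) (c : A) (ξ : X → Γ → E) (x : X) (γ μ : Γ) : E :=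
  π x (μ • c) (μ • ξ (μ⁻¹ • x) (μ⁻¹ * γ))

/-- The relation `η = 𝒫ξ`, where `𝒫` is averaging along `c`. It includes the convergence of the
defining series, which the `∑'` in `avgP` leaves open. -/
def IsAverage [AddCommMonoid E] [TopologicalSpace E] [SMul Γ E]
    (π : X → A → E → E) (c : A) (ξ η : X → Γ → E) : Prop :=
  ∀ (x : X) (γ : Γ), HasSum (avgTerm π c ξ x γ) (η x γ)

theorem IsInvariantFunction.smul_inv_apply [SMul Γ E] {ζ : X → Γ → E}
    (hζ : IsInvariantFunction ζ) (μ : Γ) (x : X) (γ : Γ) : μ • ζ (μ⁻¹ • x) (μ⁻¹ * γ) = ζ x γ := by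
  rw [← hζ, smul_inv_smul, mul_inv_cancel_left]

theorem IsEquivariantFamily.smul_inv_apply [SMul Γ E] [MulAction Γ F] {V : X → E → F}
    (hV : IsEquivariantFamily Γ V) (μ : Γ) (x : X) (v : E) :
    μ • V (μ⁻¹ • x) v = V x (μ • v) := by
  rw [hV, inv_inv, smul_inv_smul]

theorem IsCovariantFamily.smul_inv_apply [MulAction Γ E] {π : X → A → E → E}
    (hπ : IsCovariantFamily Γ π) (μ : Γ) (x : X) (a : A) (v : E) :
    μ • π (μ⁻¹ • x) a v = π x (μ • a) (μ • v) := by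
  rw [hπ, inv_inv, smul_inv_smul]

theorem IsCovariantFamily.avgTerm_smul_mul [MulAction Γ E] {π : X → A → E → E}
    (hπ : IsCovariantFamily Γ π) (c : A) (ξ : X → Γ → E) (γ₀ : Γ) (x : X) (γ μ : Γ) :
    avgTerm π c ξ (γ₀ • x) (γ₀ * γ) (γ₀ * μ) = γ₀ • avgTerm π c ξ x γ μ := by
  simp only [avgTerm, hπ γ₀ x, mul_smul, mul_inv_rev, mul_assoc, inv_smul_smul,
    inv_mul_cancel_left]

theorem IsAverage.isInvariantFunction [AddCommMonoid E] [TopologicalSpace E] [T2Space E]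
    [DistribMulAction Γ E] [ContinuousConstSMul Γ E] {π : X → A → E → E} {c : A}
    {ξ η : X → Γ → E} (hη : IsAverage π c ξ η) (hπ : IsCovariantFamily Γ π) :
    IsInvariantFunction η := by
  intro γ₀ x γ
  have translated : HasSum (fun μ => avgTerm π c ξ (γ₀ • x) (γ₀ * γ) (γ₀ * μ)) (γ₀ • η x γ) := by
    simpa only [hπ.avgTerm_smul_mul] using (hη x γ).const_smul γ₀
  exact (hη (γ₀ • x) (γ₀ * γ)).unique ((Equiv.mulLeft γ₀).hasSum_iff.mp translated)

theorem summable_avgTerm_of_finite_support [AddCommMonoid E] [TopologicalSpace E]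
    [SMulZeroClass Γ E] {π : X → A → E → E} (hπ_zero : ∀ x a, π x a 0 = 0) (c : A)
    {ξ : X → Γ → E} {S : Set Γ} (hS : S.Finite) (hξ : ∀ x, ∀ γ ∉ S, ξ x γ = 0) (x : X) (γ : Γ) :
    Summable (avgTerm π c ξ x γ) := by
  have finite_indices : ((fun μ : Γ => μ⁻¹ * γ) ⁻¹' S).Finite :=
    hS.preimage ((mul_left_injective γ).comp inv_injective).injOn
  refine summable_of_hasFiniteSupport (finite_indices.subset fun μ hμ => ?_)
  contrapose! hμ
  simp [avgTerm, hξ _ _ hμ, hπ_zero]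

theorem avgTerm_of_isInvariantFunction [SMul Γ E] [MulAction Γ F] {π' : X → A → F → F}
    {V : X → E → F} {ζ : X → Γ → E} (hπ' : IsCovariantFamily Γ π')
    (hV : IsEquivariantFamily Γ V) (hζ : IsInvariantFunction ζ) (c : A) (x : X) (γ μ : Γ) :
    avgTerm π' c (fun x γ => π' x c (V x (ζ x γ))) x γ μ =
      π' x (μ • c) (π' x (μ • c) (V x (ζ x γ))) := by
  simp only [avgTerm, hπ'.smul_inv_apply, hV.smul_inv_apply, hζ.smul_inv_apply]

theorem avg_intertwines_equivariant_family_general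
    [AddCommMonoid E] [TopologicalSpace E] [T2Space E] [DistribMulAction Γ E]
    [ContinuousConstSMul Γ E] [AddCommMonoid F] [TopologicalSpace F] [MulAction Γ F]
    {π : X → A → E → E} {π' : X → A → F → F} {V : X → E → F} {c : A}
    (hπ : IsCovariantFamily Γ π) (hπ' : IsCovariantFamily Γ π') (hV : IsEquivariantFamily Γ V)
    (hc : ∀ x w, HasSum (fun μ : Γ => π' x (μ • c) (π' x (μ • c) w)) w) :
    (∀ ζ : X → Γ → E, IsInvariantFunction ζ →
      IsAverage π' c (fun x γ => π' x c (V x (ζ x γ))) (fun x γ => V x (ζ x γ))) ∧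
    (∀ ξ η : X → Γ → E, IsAverage π c ξ η →
      IsAverage π' c (fun x γ => π' x c (V x (η x γ))) (fun x γ => V x (η x γ))) := by
  have average_of_invariant (ζ : X → Γ → E) (hζ : IsInvariantFunction ζ) :
      IsAverage π' c (fun x γ => π' x c (V x (ζ x γ))) (fun x γ => V x (ζ x γ)) := fun x γ => by
    simpa only [funext (avgTerm_of_isInvariantFunction hπ' hV hζ c x γ)] using hc x (V x (ζ x γ))
  exact ⟨average_of_invariant, fun ξ η hη => average_of_invariant η (hη.isInvariantFunction hπ)⟩

end Averaging

section Actions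

variable {Γ Z : Type*} [Group Γ] [TopologicalSpace Z] {ρ : Z → Γ → Z}
  (hρ_one : ∀ z, ρ z 1 = z) (hρ_mul : ∀ (z : Z) (γ μ : Γ), ρ (ρ z γ) μ = ρ z (γ * μ))
  (hρ_cont : ∀ γ : Γ, Continuous fun z => ρ z γ)

/-- The homeomorphism `z ↦ zγ` of a continuous right action, needed because translation along it
preserves compact supports. -/
def rightActionHomeomorph (γ : Γ) : Z ≃ₜ Z where
  toFun z := ρ z γ
  invFun z := ρ z γ⁻¹
  left_inv z := by simp only [hρ_mul, mul_inv_cancel, hρ_one]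
  right_inv z := by simp only [hρ_mul, inv_mul_cancel, hρ_one]
  continuous_toFun := hρ_cont γ
  continuous_invFun := hρ_cont γ⁻¹

/-- The left action `(γ·g)(z) = g(zγ)` on `C_c(Z, R)` induced by a right action `ρ` on `Z`. -/
abbrev translationAction {R : Type*} [Zero R] [TopologicalSpace R] : MulAction Γ C_c(Z, R) where
  smul γ g :=
    ⟨⟨fun z => g (ρ z γ), g.continuous.comp (hρ_cont γ)⟩,
      g.hasCompactSupport.comp_homeomorph (rightActionHomeomorph hρ_one hρ_mul hρ_cont γ)⟩
  one_smul g := CompactlySupportedContinuousMap.ext fun z => congrArg g (hρ_one z)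
  mul_smul γ μ g := CompactlySupportedContinuousMap.ext fun z => congrArg g (hρ_mul z γ μ).symm

/-- The action `γ • v = U_γ v` of `Γ` on the space of an isometric representation `U`. -/
abbrev isometricAction {𝕜 E : Type*} [Semiring 𝕜] [SeminormedAddCommGroup E] [Module 𝕜 E]
    (U : Γ →* (E ≃ₗᵢ[𝕜] E)) : DistribMulAction Γ E where
  smul γ v := U γ v
  one_smul v := congrArg (· v) (map_one U)
  mul_smul γ μ v := congrArg (· v) (map_mul U γ μ)
  smul_zero γ := map_zero (U γ)
  smul_add γ := map_add (U γ)

end Actions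

/-- For a `Γ`-equivariant family `V = (V_x)` of bounded operators `H → H'`, on
`Γ`-invariant functions `ζ` the family
`(π'_x(μ·c)(U'_μ(π'_{μ⁻¹x}(c)(V_{μ⁻¹x}(ζ(μ⁻¹x, μ⁻¹γ))))))_μ` is summable with
sum `V_x(ζ(x,γ))`; whence `𝒫' ∘ ((π'(c)V)⋊Γ) ∘ 𝒫 = (V⋊Γ) ∘ 𝒫`. -/
theorem avg_intertwines_equivariant_family
    {Γ : Type*} [Group Γ]
    {Z : Type*} [TopologicalSpace Z] [LocallyCompactSpace Z] [T2Space Z]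
    {X : Type*} [TopologicalSpace X] [CompactSpace X] [T2Space X] [MulAction Γ X]
    {H : Type*} [NormedAddCommGroup H] [InnerProductSpace ℂ H] [CompleteSpace H]
    {H' : Type*} [NormedAddCommGroup H'] [InnerProductSpace ℂ H'] [CompleteSpace H']
    (ρ : Z → Γ → Z)
    (hρ_one : ∀ z, ρ z 1 = z)
    (hρ_mul : ∀ (z : Z) (γ μ : Γ), ρ (ρ z γ) μ = ρ z (γ * μ))
    (hρ_cont : ∀ γ : Γ, Continuous fun z => ρ z γ)
    (hρ_proper : ∀ K L : Set Z, IsCompact K → IsCompact L →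
      {γ : Γ | ∃ z ∈ K, ρ z γ ∈ L}.Finite)
    (hX_cont : ∀ γ : Γ, Continuous fun x : X => γ • x)
    (c : Z → ℝ) (hc_cont : Continuous c) (hc_supp : HasCompactSupport c)
    (hc_mem : ∀ z, c z ∈ Set.Icc (0 : ℝ) 1)
    (hc_sum : ∀ z, HasSum (fun γ : Γ => c (ρ z γ) ^ 2) 1)
    (U : Γ →* (H ≃ₗᵢ[ℂ] H))
    (π : X → (Z → ℂ) → (H →L[ℂ] H))
    (hπ_equiv : ∀ (γ : Γ) (x : X) (f : Z → ℂ) (v : H),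
      π (γ • x) f v = U γ (π x (fun z => f (ρ z γ⁻¹)) (U γ⁻¹ v)))
    (U' : Γ →* (H' ≃ₗᵢ[ℂ] H'))
    (π' : X → (Z → ℂ) → (H' →L[ℂ] H'))
    (hπ'_add : ∀ (x : X) (f g : Z → ℂ), Continuous f → HasCompactSupport f →
      Continuous g → HasCompactSupport g → π' x (f + g) = π' x f + π' x g)
    (hπ'_mul : ∀ (x : X) (f g : Z → ℂ), Continuous f → HasCompactSupport f →
      Continuous g → HasCompactSupport g → π' x (f * g) = (π' x f).comp (π' x g))
    (hπ'_star : ∀ (x : X) (f : Z → ℂ), Continuous f → HasCompactSupport f →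
      π' x (fun z => (starRingEnd ℂ) (f z)) = ContinuousLinearMap.adjoint (π' x f))
    (hπ'_equiv : ∀ (γ : Γ) (x : X) (f : Z → ℂ) (w : H'),
      π' (γ • x) f w = U' γ (π' x (fun z => f (ρ z γ⁻¹)) (U' γ⁻¹ w)))
    (hπ'_sum : ∀ (x : X) (w : H'),
      HasSum (fun γ : Γ => π' x (fun z => (c (ρ z γ) : ℂ) ^ 2) w) w)
    (V : X → (H →L[ℂ] H'))
    (hV_equiv : ∀ (γ : Γ) (x : X) (v : H),
      V (γ • x) v = U' γ (V x (U γ⁻¹ v))) :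
    (∀ ζ : X → Γ → H,
      (∀ (γ₀ : Γ) (x : X) (γ : Γ), ζ (γ₀ • x) (γ₀ * γ) = U γ₀ (ζ x γ)) →
      ∀ (x : X) (γ : Γ),
        HasSum (fun μ : Γ =>
            π' x (fun z => (c (ρ z μ) : ℂ))
              (U' μ (π' (μ⁻¹ • x) (fun z => (c z : ℂ))
                (V (μ⁻¹ • x) (ζ (μ⁻¹ • x) (μ⁻¹ * γ))))))
          (V x (ζ x γ))) ∧
    (∀ (ξ : X → Γ → H) (F : Finset Γ),
      (∀ (x : X) (γ : Γ), γ ∉ F → ξ x γ = 0) →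
      (∀ γ : Γ, Continuous fun x => ξ x γ) →
      ∀ (x : X) (γ : Γ),
        avgP π' U' ρ c
          (fun x' γ' => π' x' (fun z => (c z : ℂ)) (V x' (avgP π U ρ c ξ x' γ'))) x γ =
        V x (avgP π U ρ c ξ x γ)) := by
  let : MulAction Γ C_c(Z, ℂ) := translationAction hρ_one hρ_mul hρ_cont
  let : DistribMulAction Γ H := isometricAction U
  let : DistribMulAction Γ H' := isometricAction U'
  have : ContinuousConstSMul Γ H := ⟨fun γ => (U γ).continuous⟩
  let χ : C_c(Z, ℂ) :=
    ⟨⟨fun z => c z, Complex.continuous_ofReal.comp hc_cont⟩, hc_supp.comp_left Complex.ofReal_zero⟩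
  let πc (x : X) (g : C_c(Z, ℂ)) (v : H) : H := π x g v
  let πc' (x : X) (g : C_c(Z, ℂ)) (w : H') : H' := π' x g w
  have square (x : X) (g : C_c(Z, ℂ)) : π' x (fun z => g z ^ 2) = (π' x g).comp (π' x g) :=
    (congrArg (π' x) (sq ⇑g)).trans
      (hπ'_mul x g g g.continuous g.hasCompactSupport g.continuous g.hasCompactSupport)
  have sum_squares (x : X) (w : H') : HasSum (fun μ : Γ => πc' x (μ • χ) (πc' x (μ • χ) w)) w := by
    simp only [πc', ← ContinuousLinearMap.comp_apply, ← square]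
    exact hπ'_sum x w
  obtain ⟨on_invariant, on_average⟩ := avg_intertwines_equivariant_family_general
    (π := πc) (V := fun x v => V x v) (fun γ x g => hπ_equiv γ x g)
    (fun γ x g => hπ'_equiv γ x g) hV_equiv sum_squares
  refine ⟨on_invariant, fun ξ F hξ _ x γ => ?_⟩
  have average : IsAverage πc χ ξ (avgP π U ρ c ξ) := fun x γ =>
    (summable_avgTerm_of_finite_support (π := πc) (fun x g => map_zero (π x g)) χ
      F.finite_toSet hξ x γ).hasSum
  exact (on_average ξ _ average x γ).tsum_eq
end

section
/- Define W₀ : C_c(X×Γ, H) → (functions X×Γ → H') by W₀ξ̂(x,γ) = π'_x(c)(V_x(𝒫ξ̂(x,γ))). Then for every ξ̂ ∈ C_c(X×Γ, H), x ∈ X and γ ∈ Γ, the family (π_x(c)(V_x*(π'_x(μ·c)(U'_μ(π'_{μ⁻¹x}(c)(V_{μ⁻¹x}(𝒫ξ̂(μ⁻¹x, μ⁻¹γ))))))))_{μ∈Γ} is summable in H with sum ((π⋊Γ)(e)ξ̂)(x,γ) = ∑_{ν∈Γ} π_x(c·(ν·c))(U_ν(ξ̂(ν⁻¹x, ν⁻¹γ))).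 In operator form, W₀* ∘ W₀ = (π⋊Γ)(e) on C_c(X×Γ, H), where W₀* = ((π(c)V*)⋊Γ) ∘ 𝒫' (the computation showing that W is a unitary from the Connes–Skandalis module 𝓔_Z^H onto 𝓔_Z^{H'}). -/
/-- The Mishchenko projection acting on `C_c(X×Γ, H)`:
`((π⋊Γ)(e)ξ̂)(x,γ) = ∑_μ π_x(c·(μ·c))(U_μ(ξ̂(μ⁻¹x, μ⁻¹γ)))`. -/
noncomputable def mishAct {Γ X Z H : Type*} [Group Γ] [MulAction Γ X]
    [NormedAddCommGroup H] [InnerProductSpace ℂ H]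
    (π : X → (Z → ℂ) → (H →L[ℂ] H)) (U : Γ →* (H ≃ₗᵢ[ℂ] H))
    (ρ : Z → Γ → Z) (c : Z → ℝ) (ξ : X → Γ → H) (x : X) (γ : Γ) : H :=
  ∑' μ : Γ, π x (fun z => (c z : ℂ) * (c (ρ z μ) : ℂ)) (U μ (ξ (μ⁻¹ • x) (μ⁻¹ * γ)))

/-!
A function `ζ : X → Γ → H` is translation invariant when `U_μ ζ(μ⁻¹x, μ⁻¹γ) = ζ(x,γ)`. Every
average `𝒫ξ̂` is invariant, and so is `V 𝒫ξ̂` by equivariance of `V`. For an invariant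
`ζ : X → Γ → H'`, equivariance turns the `μ`-th term of `𝒫'(π'(c)ζ)` into `π'_x((μ·c)²)ζ(x,γ)`, so
that `𝒫'(π'(c)ζ) = ζ` by nondegeneracy. Hence `W₀* W₀ ξ̂ = π(c) V* V 𝒫ξ̂ = π(c) 𝒫ξ̂`, which is
`(π⋊Γ)(e)ξ̂` by multiplicativity of `π`.
-/

section Translation

variable {Γ Z : Type*} [Group Γ] [TopologicalSpace Z] {ρ : Z → Γ → Z}

/-- The homeomorphism `z ↦ zγ` of a space with a right action `ρ` by continuous maps, carrying
supports to supports of translates. The action is an unbundled function, as in `avgP`. -/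
def rightTranslateHomeomorph (hρ_one : ∀ z, ρ z 1 = z)
    (hρ_mul : ∀ (z : Z) (γ μ : Γ), ρ (ρ z γ) μ = ρ z (γ * μ))
    (hρ_cont : ∀ γ : Γ, Continuous fun z => ρ z γ) (γ : Γ) : Z ≃ₜ Z where
  toFun z := ρ z γ
  invFun z := ρ z γ⁻¹
  left_inv z := (hρ_mul z γ γ⁻¹).trans (by rw [mul_inv_cancel, hρ_one])
  right_inv z := (hρ_mul z γ⁻¹ γ).trans (by rw [inv_mul_cancel, hρ_one])
  continuous_toFun := hρ_cont γ
  continuous_invFun := hρ_cont γ⁻¹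

theorem hasCompactSupport_comp_rightTranslate {E : Type*} [Zero E] (hρ_one : ∀ z, ρ z 1 = z)
    (hρ_mul : ∀ (z : Z) (γ μ : Γ), ρ (ρ z γ) μ = ρ z (γ * μ))
    (hρ_cont : ∀ γ : Γ, Continuous fun z => ρ z γ) {f : Z → E} (hf : HasCompactSupport f)
    (γ : Γ) : HasCompactSupport fun z => f (ρ z γ) :=
  hf.comp_homeomorph (rightTranslateHomeomorph hρ_one hρ_mul hρ_cont γ)

end Translation

/-- Multiplicativity of a representation of `C_c(Z)`, applied below to products of translates of the
cut-off. As in `avgP`, `φ` is defined on all functions; its values outside `C_c(Z)` are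
unconstrained. -/
def IsMultiplicativeOnCc {Z H : Type*} [TopologicalSpace Z] [NormedAddCommGroup H]
    [InnerProductSpace ℂ H] (φ : (Z → ℂ) → (H →L[ℂ] H)) : Prop :=
  ∀ f g : Z → ℂ, Continuous f → HasCompactSupport f → Continuous g → HasCompactSupport g →
    φ (f * g) = (φ f).comp (φ g)

theorem IsMultiplicativeOnCc.apply_ofReal_mul {Z H : Type*} [TopologicalSpace Z]
    [NormedAddCommGroup H] [InnerProductSpace ℂ H] {φ : (Z → ℂ) → (H →L[ℂ] H)}
    (hφ : IsMultiplicativeOnCc φ) {f g : Z → ℝ} (hf : Continuous f) (hf_supp : HasCompactSupport f)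
    (hg : Continuous g) (hg_supp : HasCompactSupport g) (v : H) :
    φ (fun z => (f z : ℂ) * (g z : ℂ)) v =
      φ (fun z => (f z : ℂ)) (φ (fun z => (g z : ℂ)) v) :=
  DFunLike.congr_fun (hφ _ _ (Complex.continuous_ofReal.comp hf)
    (hf_supp.comp_left Complex.ofReal_zero) (Complex.continuous_ofReal.comp hg)
    (hg_supp.comp_left Complex.ofReal_zero)) v

section Equivariance

variable {Γ X Z H H' : Type*} [Group Γ] [MulAction Γ X]
  [NormedAddCommGroup H'] [InnerProductSpace ℂ H'] [NormedAddCommGroup H] [InnerProductSpace ℂ H]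

/-- `Γ`-equivariance of a family of representations of functions on `Z`:
`π_{γx}(f) = U_γ π_x(γ⁻¹·f) U_γ⁻¹`. -/
def IsEquivariantRep (ρ : Z → Γ → Z) (U : Γ →* (H ≃ₗᵢ[ℂ] H))
    (π : X → (Z → ℂ) → (H →L[ℂ] H)) : Prop :=
  ∀ (γ : Γ) (x : X) (f : Z → ℂ) (v : H),
    π (γ • x) f v = U γ (π x (fun z => f (ρ z γ⁻¹)) (U γ⁻¹ v))

/-- `Γ`-equivariance of a family of unitaries, `V_{γx} = U'_γ V_x U_γ⁻¹`, under which `V` maps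
translation invariant functions to translation invariant ones. -/
def IsEquivariantUnitary (U : Γ →* (H ≃ₗᵢ[ℂ] H)) (U' : Γ →* (H' ≃ₗᵢ[ℂ] H'))
    (V : X → (H ≃ₗᵢ[ℂ] H')) : Prop :=
  ∀ (γ : Γ) (x : X) (v : H), V (γ • x) v = U' γ (V x (U γ⁻¹ v))

/-- The functions on `X × Γ` fixed by the action `(μ·ζ)(x,γ) = U_μ ζ(μ⁻¹x, μ⁻¹γ)` of `Γ`; the
averaging map takes its values among them. -/
def IsTranslationInvariant (U : Γ →* (H ≃ₗᵢ[ℂ] H)) (ζ : X → Γ → H) : Prop :=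
  ∀ (μ : Γ) (x : X) (γ : Γ), U μ (ζ (μ⁻¹ • x) (μ⁻¹ * γ)) = ζ x γ

variable {ρ : Z → Γ → Z} {c : Z → ℝ} {U : Γ →* (H ≃ₗᵢ[ℂ] H)} {π : X → (Z → ℂ) → (H →L[ℂ] H)}
  {U' : Γ →* (H' ≃ₗᵢ[ℂ] H')} {V : X → (H ≃ₗᵢ[ℂ] H')}

theorem IsEquivariantRep.map_apply_inv_smul (hπ : IsEquivariantRep ρ U π) (γ : Γ) (x : X)
    (f : Z → ℂ) (v : H) :
    U γ (π (γ⁻¹ • x) f v) = π x (fun z => f (ρ z γ)) (U γ v) := by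
  simp [hπ γ⁻¹ x f v]

theorem IsEquivariantUnitary.map_apply_inv_smul (hV : IsEquivariantUnitary U U' V) (γ : Γ) (x : X)
    (v : H) : U' γ (V (γ⁻¹ • x) v) = V x (U γ v) := by
  simp [hV γ⁻¹ x v]

theorem isTranslationInvariant_avgP (hρ_mul : ∀ (z : Z) (γ μ : Γ), ρ (ρ z γ) μ = ρ z (γ * μ))
    (hπ : IsEquivariantRep ρ U π) (c : Z → ℝ) (ξ : X → Γ → H) :
    IsTranslationInvariant U (avgP π U ρ c ξ) := by
  intro μ x γ
  let summand (ν : Γ) : H := π x (fun z => (c (ρ z ν) : ℂ)) (U ν (ξ (ν⁻¹ • x) (ν⁻¹ * γ)))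
  have hterm (ν : Γ) : U μ (π (μ⁻¹ • x) (fun z => (c (ρ z ν) : ℂ))
      (U ν (ξ (ν⁻¹ • μ⁻¹ • x) (ν⁻¹ * (μ⁻¹ * γ))))) = summand (μ * ν) := by
    simp [summand, hπ.map_apply_inv_smul, hρ_mul, mul_smul, mul_assoc]
  calc U μ (avgP π U ρ c ξ (μ⁻¹ • x) (μ⁻¹ * γ))
      = ∑' ν, summand (μ * ν) :=
        (U μ).toContinuousLinearEquiv.map_tsum.trans (tsum_congr hterm)
    _ = avgP π U ρ c ξ x γ := (Equiv.mulLeft μ).tsum_eq summand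

theorem IsTranslationInvariant.map_equivariantUnitary {ζ : X → Γ → H}
    (hζ : IsTranslationInvariant U ζ) (hV : IsEquivariantUnitary U U' V) :
    IsTranslationInvariant U' fun x γ => V x (ζ x γ) := fun μ x γ => by
  rw [hV.map_apply_inv_smul, hζ]

theorem IsTranslationInvariant.hasSum_avgP_cutoff [TopologicalSpace Z] {ζ : X → Γ → H}
    (hζ : IsTranslationInvariant U ζ) (hπ : IsEquivariantRep ρ U π)
    (hπ_mul : ∀ x, IsMultiplicativeOnCc (π x)) (hc_cont : Continuous c)
    (hc_supp : HasCompactSupport c)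
    (hπ_sum : ∀ (x : X) (v : H), HasSum (fun γ : Γ => π x (fun z => (c (ρ z γ) : ℂ) ^ 2) v) v)
    (x : X) (γ : Γ) :
    HasSum (fun μ : Γ => π x (fun z => (c (ρ z μ) : ℂ))
      (U μ (π (μ⁻¹ • x) (fun z => (c z : ℂ)) (ζ (μ⁻¹ • x) (μ⁻¹ * γ))))) (ζ x γ) := by
  have hsq (y : X) (v : H) : π y (fun z => (c z : ℂ)) (π y (fun z => (c z : ℂ)) v) =
      π y (fun z => (c z : ℂ) ^ 2) v := by
    simp only [sq, (hπ_mul y).apply_ofReal_mul hc_cont hc_supp hc_cont hc_supp]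
  refine (hπ_sum x (ζ x γ)).congr_fun fun μ => ?_
  rw [← hπ.map_apply_inv_smul μ x (fun z => (c z : ℂ)), hsq, hπ.map_apply_inv_smul, hζ]

theorem summable_avgP_of_finset {ξ : X → Γ → H} {F : Finset Γ}
    (hF : ∀ (x : X) (γ : Γ), γ ∉ F → ξ x γ = 0) (x : X) (γ : Γ) :
    Summable fun μ : Γ =>
      π x (fun z => (c (ρ z μ) : ℂ)) (U μ (ξ (μ⁻¹ • x) (μ⁻¹ * γ))) := by
  classical
  refine summable_of_ne_finset_zero (s := F.image fun ν => γ * ν⁻¹) fun μ hμ => ?_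
  have hμF : μ⁻¹ * γ ∉ F := fun h => hμ (Finset.mem_image.2 ⟨_, h, by simp⟩)
  rw [hF _ _ hμF, map_zero, map_zero]

theorem cutoff_avgP_eq_mishAct [TopologicalSpace Z] (hρ_one : ∀ z, ρ z 1 = z)
    (hρ_mul : ∀ (z : Z) (γ μ : Γ), ρ (ρ z γ) μ = ρ z (γ * μ))
    (hρ_cont : ∀ γ : Γ, Continuous fun z => ρ z γ) {x : X} (hπ_mul : IsMultiplicativeOnCc (π x))
    (hc_cont : Continuous c) (hc_supp : HasCompactSupport c) {ξ : X → Γ → H} {γ : Γ}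
    (hξ : Summable fun μ : Γ =>
      π x (fun z => (c (ρ z μ) : ℂ)) (U μ (ξ (μ⁻¹ • x) (μ⁻¹ * γ)))) :
    π x (fun z => (c z : ℂ)) (avgP π U ρ c ξ x γ) = mishAct π U ρ c ξ x γ := by
  rw [avgP, ContinuousLinearMap.map_tsum _ hξ]
  refine tsum_congr fun μ => (hπ_mul.apply_ofReal_mul hc_cont hc_supp
    (hc_cont.comp (hρ_cont μ)) ?_ _).symm
  exact hasCompactSupport_comp_rightTranslate hρ_one hρ_mul hρ_cont hc_supp μ

end Equivariance

section ConnesSkandalis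

variable {Γ X Z H H' : Type*} [Group Γ] [MulAction Γ X]
  [NormedAddCommGroup H'] [InnerProductSpace ℂ H'] [NormedAddCommGroup H] [InnerProductSpace ℂ H]
  (π : X → (Z → ℂ) → (H →L[ℂ] H)) (U : Γ →* (H ≃ₗᵢ[ℂ] H)) (π' : X → (Z → ℂ) → (H' →L[ℂ] H'))
  (U' : Γ →* (H' ≃ₗᵢ[ℂ] H')) (V : X → (H ≃ₗᵢ[ℂ] H')) (ρ : Z → Γ → Z) (c : Z → ℝ)

/-- The operator `W₀ξ̂(x,γ) = π'_x(c)(V_x(𝒫ξ̂(x,γ)))`, which induces the comparison `W` of the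
Connes–Skandalis modules of `H` and `H'`. -/
noncomputable def W0 (ξ : X → Γ → H) (x : X) (γ : Γ) : H' :=
  π' x (fun z => (c z : ℂ)) (V x (avgP π U ρ c ξ x γ))

/-- The operator `W₀* = ((π(c)V*)⋊Γ) ∘ 𝒫'`, that is `W₀*η(x,γ) = π_x(c)(V_x*(𝒫'η(x,γ)))`, defined
by this formula rather than as an adjoint. -/
noncomputable def W0Star (η : X → Γ → H') (x : X) (γ : Γ) : H :=
  π x (fun z => (c z : ℂ)) ((V x).symm (avgP π' U' ρ c η x γ))

variable {π U π' U' V ρ c}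

theorem W0_star_W0_eq_mishchenko_general [TopologicalSpace Z] (hρ_one : ∀ z, ρ z 1 = z)
    (hρ_mul : ∀ (z : Z) (γ μ : Γ), ρ (ρ z γ) μ = ρ z (γ * μ))
    (hρ_cont : ∀ γ : Γ, Continuous fun z => ρ z γ)
    (hc_cont : Continuous c) (hc_supp : HasCompactSupport c)
    (hπ_mul : ∀ x, IsMultiplicativeOnCc (π x)) (hπ_equiv : IsEquivariantRep ρ U π)
    (hπ'_mul : ∀ x, IsMultiplicativeOnCc (π' x)) (hπ'_equiv : IsEquivariantRep ρ U' π')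
    (hπ'_sum : ∀ (x : X) (w : H'),
      HasSum (fun γ : Γ => π' x (fun z => (c (ρ z γ) : ℂ) ^ 2) w) w)
    (hV_equiv : IsEquivariantUnitary U U' V) {ξ : X → Γ → H} {x : X} {γ : Γ}
    (hξ : Summable fun μ : Γ =>
      π x (fun z => (c (ρ z μ) : ℂ)) (U μ (ξ (μ⁻¹ • x) (μ⁻¹ * γ)))) :
    HasSum (fun μ : Γ => π x (fun z => (c z : ℂ)) ((V x).symm
        (π' x (fun z => (c (ρ z μ) : ℂ)) (U' μ (W0 π U π' V ρ c ξ (μ⁻¹ • x) (μ⁻¹ * γ))))))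
      (mishAct π U ρ c ξ x γ) ∧
    W0Star π π' U' V ρ c (W0 π U π' V ρ c ξ) x γ = mishAct π U ρ c ξ x γ := by
  have hinv : IsTranslationInvariant U' fun y ν => V y (avgP π U ρ c ξ y ν) :=
    (isTranslationInvariant_avgP hρ_mul hπ_equiv c ξ).map_equivariantUnitary hV_equiv
  have hsum : HasSum (fun μ : Γ => π' x (fun z => (c (ρ z μ) : ℂ))
      (U' μ (W0 π U π' V ρ c ξ (μ⁻¹ • x) (μ⁻¹ * γ)))) (V x (avgP π U ρ c ξ x γ)) :=
    hinv.hasSum_avgP_cutoff hπ'_equiv hπ'_mul hc_cont hc_supp hπ'_sum x γ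
  have hcutoff : π x (fun z => (c z : ℂ)) ((V x).symm (V x (avgP π U ρ c ξ x γ))) =
      mishAct π U ρ c ξ x γ := by
    rw [LinearIsometryEquiv.symm_apply_apply,
      cutoff_avgP_eq_mishAct hρ_one hρ_mul hρ_cont (hπ_mul x) hc_cont hc_supp hξ]
  constructor
  · rw [← hcutoff]
    exact (hsum.mapL ((V x).symm.toContinuousLinearEquiv : H' →L[ℂ] H)).mapL _
  · rw [← hcutoff, W0Star, avgP, hsum.tsum_eq]

end ConnesSkandalis

/-- With `W₀ξ̂(x,γ) = π'_x(c)(V_x(𝒫ξ̂(x,γ)))` built from a `Γ`-equivariant family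
of unitaries `V_x : H → H'`, one has `W₀* ∘ W₀ = (π⋊Γ)(e)` on `C_c(X×Γ, H)`:
the family `(π_x(c)(V_x*(π'_x(μ·c)(U'_μ(π'_{μ⁻¹x}(c)(V_{μ⁻¹x}(𝒫ξ̂(μ⁻¹x,μ⁻¹γ)))))))_μ`
is summable with sum `((π⋊Γ)(e)ξ̂)(x,γ)`. -/
theorem W0_star_W0_eq_mishchenko
    {Γ : Type*} [Group Γ]
    {Z : Type*} [TopologicalSpace Z] [LocallyCompactSpace Z] [T2Space Z]
    {X : Type*} [TopologicalSpace X] [CompactSpace X] [T2Space X] [MulAction Γ X]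
    {H : Type*} [NormedAddCommGroup H] [InnerProductSpace ℂ H] [CompleteSpace H]
    {H' : Type*} [NormedAddCommGroup H'] [InnerProductSpace ℂ H'] [CompleteSpace H']
    (ρ : Z → Γ → Z)
    (hρ_one : ∀ z, ρ z 1 = z)
    (hρ_mul : ∀ (z : Z) (γ μ : Γ), ρ (ρ z γ) μ = ρ z (γ * μ))
    (hρ_cont : ∀ γ : Γ, Continuous fun z => ρ z γ)
    (hρ_proper : ∀ K L : Set Z, IsCompact K → IsCompact L →
      {γ : Γ | ∃ z ∈ K, ρ z γ ∈ L}.Finite)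
    (hX_cont : ∀ γ : Γ, Continuous fun x : X => γ • x)
    (c : Z → ℝ) (hc_cont : Continuous c) (hc_supp : HasCompactSupport c)
    (hc_mem : ∀ z, c z ∈ Set.Icc (0 : ℝ) 1)
    (hc_sum : ∀ z, HasSum (fun γ : Γ => c (ρ z γ) ^ 2) 1)
    (U : Γ →* (H ≃ₗᵢ[ℂ] H))
    (π : X → (Z → ℂ) → (H →L[ℂ] H))
    (hπ_add : ∀ (x : X) (f g : Z → ℂ), Continuous f → HasCompactSupport f →
      Continuous g → HasCompactSupport g → π x (f + g) = π x f + π x g)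
    (hπ_mul : ∀ (x : X) (f g : Z → ℂ), Continuous f → HasCompactSupport f →
      Continuous g → HasCompactSupport g → π x (f * g) = (π x f).comp (π x g))
    (hπ_star : ∀ (x : X) (f : Z → ℂ), Continuous f → HasCompactSupport f →
      π x (fun z => (starRingEnd ℂ) (f z)) = ContinuousLinearMap.adjoint (π x f))
    (hπ_equiv : ∀ (γ : Γ) (x : X) (f : Z → ℂ) (v : H),
      π (γ • x) f v = U γ (π x (fun z => f (ρ z γ⁻¹)) (U γ⁻¹ v)))
    (U' : Γ →* (H' ≃ₗᵢ[ℂ] H'))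
    (π' : X → (Z → ℂ) → (H' →L[ℂ] H'))
    (hπ'_add : ∀ (x : X) (f g : Z → ℂ), Continuous f → HasCompactSupport f →
      Continuous g → HasCompactSupport g → π' x (f + g) = π' x f + π' x g)
    (hπ'_mul : ∀ (x : X) (f g : Z → ℂ), Continuous f → HasCompactSupport f →
      Continuous g → HasCompactSupport g → π' x (f * g) = (π' x f).comp (π' x g))
    (hπ'_star : ∀ (x : X) (f : Z → ℂ), Continuous f → HasCompactSupport f →
      π' x (fun z => (starRingEnd ℂ) (f z)) = ContinuousLinearMap.adjoint (π' x f))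
    (hπ'_equiv : ∀ (γ : Γ) (x : X) (f : Z → ℂ) (w : H'),
      π' (γ • x) f w = U' γ (π' x (fun z => f (ρ z γ⁻¹)) (U' γ⁻¹ w)))
    (hπ'_sum : ∀ (x : X) (w : H'),
      HasSum (fun γ : Γ => π' x (fun z => (c (ρ z γ) : ℂ) ^ 2) w) w)
    (V : X → (H ≃ₗᵢ[ℂ] H'))
    (hV_equiv : ∀ (γ : Γ) (x : X) (v : H),
      V (γ • x) v = U' γ (V x (U γ⁻¹ v))) :
    ∀ (ξ : X → Γ → H) (F : Finset Γ),
      (∀ (x : X) (γ : Γ), γ ∉ F → ξ x γ = 0) →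
      (∀ γ : Γ, Continuous fun x => ξ x γ) →
      ∀ (x : X) (γ : Γ),
        HasSum (fun μ : Γ =>
            π x (fun z => (c z : ℂ)) ((V x).symm
              (π' x (fun z => (c (ρ z μ) : ℂ))
                (U' μ (π' (μ⁻¹ • x) (fun z => (c z : ℂ))
                  (V (μ⁻¹ • x) (avgP π U ρ c ξ (μ⁻¹ • x) (μ⁻¹ * γ))))))))
          (mishAct π U ρ c ξ x γ) ∧
        π x (fun z => (c z : ℂ)) ((V x).symm
            (avgP π' U' ρ c
              (fun x' γ' => π' x' (fun z => (c z : ℂ)) (V x' (avgP π U ρ c ξ x' γ')))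
              x γ)) =
          mishAct π U ρ c ξ x γ := by
  intro ξ F hF _ x γ
  exact W0_star_W0_eq_mishchenko_general hρ_one hρ_mul hρ_cont hc_cont hc_supp hπ_mul hπ_equiv
    hπ'_mul hπ'_equiv hπ'_sum hV_equiv (summable_avgP_of_finset hF x γ)
end

section
/- Assume H ≠ {0}, assume each π_x is nondegenerate (the linear span of {π_x(g)v : g a compactly supported continuous function on Z, v ∈ H} is dense in H), and assume that for every compactly supported continuous g on Z and every v ∈ H the map x ↦ π_x(g)v is norm-continuous from X to H. Then there exist n ∈ ℕ, compactly supported continuous functions ψ₁, …, ψₙ on Z, continuous functions u₁, …, uₙ : X → ℝ, and vectors ζ₁, …, ζₙ ∈ H such that ‖∑_{i=1}^n u_i(x)·π_x(ψ_i)(ζ_i)‖ ≥ 3/4 for every x ∈ X. (This compactness/partition-of-unity argument produces, after normalization, a section φ ∈ π(C_c(Z×X))(C(X)⊗H) with ‖φ(x)‖ = 1 for all x, the key step in proving that the Connes–Skandalis module is full.) -/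
/-!
At a point `y`, nondegeneracy produces a finite sum of sections `x ↦ π_x(g)v` whose value at `y` is
close to a prescribed vector, and by continuity it stays close near `y`. Finitely many of these
local approximants suffice by compactness, and averaging them with continuous weights keeps the
error small because balls are convex. The weights come from the error functions of the approximants
themselves: at error tolerance `ε` they are the positive parts of `ε - error`, normalized.
-/

theorem exists_nonneg_sum_eq_one_pos_of_ne_zero {X : Type*} [TopologicalSpace X]
    {ι : Type*} [Fintype ι] (g : ι → C(X, ℝ)) (hg : ∀ x, ∃ i, 0 < g i x) :
    ∃ p : ι → C(X, ℝ), (∀ i x, 0 ≤ p i x) ∧ (∀ x, ∑ i, p i x = 1) ∧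
      ∀ i x, p i x ≠ 0 → 0 < g i x := by
  have hsum_pos (x : X) : 0 < ∑ i, max (g i x) 0 := by
    obtain ⟨i, hi⟩ := hg x
    exact Finset.sum_pos' (fun _ _ => le_max_right _ _) ⟨i, Finset.mem_univ i, lt_max_of_lt_left hi⟩
  have hcont (i : ι) : Continuous fun x => max (g i x) 0 / ∑ j, max (g j x) 0 :=
    Continuous.div₀ (by fun_prop) (by fun_prop) fun x => (hsum_pos x).ne'
  refine ⟨fun i => ⟨_, hcont i⟩, fun i x => div_nonneg (le_max_right _ _) (hsum_pos x).le,
    fun x => ?_, fun i x hne => ?_⟩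
  · simp only [ContinuousMap.coe_mk, ← Finset.sum_div, div_self (hsum_pos x).ne']
  · contrapose! hne
    simp only [ContinuousMap.coe_mk, max_eq_right hne, zero_div]

theorem mem_closure_of_forall_apply_mem_closure {X : Type*} [TopologicalSpace X] [CompactSpace X]
    {F : Type*} [SeminormedAddCommGroup F] [NormedSpace ℝ F]
    (M : Submodule C(X, ℝ) C(X, F)) (f : C(X, F))
    (hf : ∀ x, f x ∈ closure ((fun s : C(X, F) => s x) '' M)) :
    f ∈ closure (M : Set C(X, F)) := by
  refine Metric.mem_closure_iff.2 fun ε hε => ?_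
  have hlocal (y : X) : ∃ s ∈ M, dist (s y) (f y) < ε := by
    obtain ⟨_, ⟨s, hsM, rfl⟩, hs⟩ := Metric.mem_closure_iff.1 (hf y) ε hε
    exact ⟨s, hsM, by rwa [dist_comm]⟩
  choose s hsM hs using hlocal
  have hopen (y : X) : IsOpen {x | dist (s y x) (f x) < ε} :=
    isOpen_lt (by fun_prop) continuous_const
  obtain ⟨t, ht⟩ := CompactSpace.elim_nhds_subcover (fun y => {x | dist (s y x) (f x) < ε})
    fun y => (hopen y).mem_nhds (hs y)
  have hcover (x : X) : ∃ y : t, 0 < ε - dist (s y x) (f x) := by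
    have hx : x ∈ ⋃ y ∈ t, {x | dist (s y x) (f x) < ε} := ht ▸ Set.mem_univ x
    simpa using hx
  obtain ⟨p, hp_nonneg, hp_sum, hp_pos⟩ := exists_nonneg_sum_eq_one_pos_of_ne_zero
    (fun y : t => ⟨fun x => ε - dist (s y x) (f x), by fun_prop⟩) hcover
  refine ⟨∑ y, p y • s y, M.sum_mem fun y _ => M.smul_mem _ (hsM y), ?_⟩
  rw [dist_comm, ContinuousMap.dist_lt_iff hε]
  intro x
  have hball : ∑ᶠ y, p y x • s y x ∈ Metric.ball (f x) ε :=
    (convex_ball (f x) ε).finsum_mem (fun y => hp_nonneg y x)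
      (by rw [finsum_eq_sum_of_fintype, hp_sum])
      fun y hy => sub_pos.1 (hp_pos y x hy)
  simpa [finsum_eq_sum_of_fintype] using hball

section SectionModule

variable {X : Type*} [TopologicalSpace X] {R : Type*} [Semiring R]
  {E : Type*} [AddCommMonoid E] [Module R E]
  {F : Type*} [SeminormedAddCommGroup F] [NormedSpace ℝ F] [Module R F] {ι : Type*}

/-- The `C(X, ℝ)`-module generated by the sections `x ↦ T x i v` of a family of linear maps; those
that are not continuous contribute nothing. For `T x g = π_x(g)`, `g` compactly supported, it
consists of the sections among which a uniformly nonvanishing one is sought. -/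
def sectionModule (T : X → ι → E →ₗ[R] F) : Submodule C(X, ℝ) C(X, F) :=
  Submodule.span C(X, ℝ) {s | ∃ i v, ∀ x, s x = T x i v}

theorem exists_eq_sum_of_mem_sectionModule {T : X → ι → E →ₗ[R] F} {s : C(X, F)}
    (hs : s ∈ sectionModule T) :
    ∃ (n : ℕ) (ψ : Fin n → ι) (u : Fin n → C(X, ℝ)) (ζ : Fin n → E),
      ∀ x, s x = ∑ j, u j x • T x (ψ j) (ζ j) := by
  obtain ⟨n, u, σ, rfl⟩ := Submodule.mem_span_set'.1 hs
  choose ψ ζ hσ using fun j => (σ j).2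
  exact ⟨n, ψ, u, ζ, fun x => by simp [hσ]⟩

theorem iSup_range_subset_image_sectionModule {T : X → ι → E →ₗ[R] F}
    (hT : ∀ i v, Continuous fun x => T x i v) (x : X) :
    ((⨆ i, (T x i).range : Submodule R F) : Set F) ⊆
      (fun s : C(X, F) => s x) '' sectionModule T := by
  intro w hw
  induction hw using Submodule.iSup_induction' with
  | mem i w hw =>
    obtain ⟨v, rfl⟩ := hw
    exact ⟨⟨_, hT i v⟩, Submodule.subset_span ⟨i, v, fun _ => rfl⟩, rfl⟩
  | zero => exact ⟨0, zero_mem _, rfl⟩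
  | add _ _ _ _ ha hb =>
    obtain ⟨s, hs, rfl⟩ := ha
    obtain ⟨t, ht, rfl⟩ := hb
    exact ⟨s + t, add_mem hs ht, rfl⟩

theorem dense_sectionModule [CompactSpace X] {T : X → ι → E →ₗ[R] F}
    (hT : ∀ i v, Continuous fun x => T x i v)
    (hdense : ∀ x, Dense ((⨆ i, (T x i).range : Submodule R F) : Set F)) :
    Dense (sectionModule T : Set C(X, F)) := fun f =>
  mem_closure_of_forall_apply_mem_closure _ f fun x =>
    (hdense x).mono (iSup_range_subset_image_sectionModule hT x) (f x)

end SectionModule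

theorem exists_uniformly_nonvanishing_section_general
    {X : Type*} [TopologicalSpace X] [CompactSpace X] {R : Type*} [Semiring R]
    {E : Type*} [AddCommMonoid E] [Module R E]
    {F : Type*} [NormedAddCommGroup F] [NormedSpace ℝ F] [Module R F] [Nontrivial F]
    {ι : Type*} (T : X → ι → E →ₗ[R] F)
    (hT : ∀ i v, Continuous fun x => T x i v)
    (hdense : ∀ x, Dense ((⨆ i, (T x i).range : Submodule R F) : Set F)) (r : ℝ) :
    ∃ (n : ℕ) (ψ : Fin n → ι) (u : Fin n → C(X, ℝ)) (ζ : Fin n → E),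
      ∀ x, r ≤ ‖∑ j, u j x • T x (ψ j) (ζ j)‖ := by
  obtain ⟨v, hv⟩ := NormedSpace.exists_lt_norm ℝ F r
  obtain ⟨s, hs, hdist⟩ := (dense_sectionModule hT hdense).exists_dist_lt
    (ContinuousMap.const X v) (sub_pos.2 hv)
  obtain ⟨n, ψ, u, ζ, hsum⟩ := exists_eq_sum_of_mem_sectionModule hs
  refine ⟨n, ψ, u, ζ, fun x => ?_⟩
  have hx : ‖v - s x‖ < ‖v‖ - r := by
    simpa [dist_eq_norm] using (ContinuousMap.dist_lt_iff (sub_pos.2 hv)).1 hdist x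
  rw [← hsum x]
  linarith [norm_sub_norm_le v (s x)]


/-- Partition-of-unity argument for fullness of the Connes–Skandalis module:
if `H ≠ {0}`, each `π_x` is nondegenerate, and `x ↦ π_x(g)v` is norm-continuous
for each compactly supported continuous `g` and `v ∈ H`, then there are
finitely many compactly supported continuous `ψ_i` on `Z`, continuous
`u_i : X → ℝ` and vectors `ζ_i ∈ H` with `‖∑ᵢ u_i(x)·π_x(ψ_i)(ζ_i)‖ ≥ 3/4`
for every `x ∈ X`. -/
theorem exists_uniformly_nonvanishing_section
    {Z : Type*} [TopologicalSpace Z] [LocallyCompactSpace Z] [T2Space Z]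
    {X : Type*} [TopologicalSpace X] [CompactSpace X] [T2Space X]
    {H : Type*} [NormedAddCommGroup H] [InnerProductSpace ℂ H] [CompleteSpace H]
    [Nontrivial H]
    (π : X → (Z → ℂ) → (H →L[ℂ] H))
    (hπ_add : ∀ (x : X) (f g : Z → ℂ), Continuous f → HasCompactSupport f →
      Continuous g → HasCompactSupport g → π x (f + g) = π x f + π x g)
    (hπ_smul : ∀ (x : X) (a : ℂ) (f : Z → ℂ), Continuous f → HasCompactSupport f →
      π x (a • f) = a • π x f)
    (hπ_mul : ∀ (x : X) (f g : Z → ℂ), Continuous f → HasCompactSupport f →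
      Continuous g → HasCompactSupport g → π x (f * g) = (π x f).comp (π x g))
    (hπ_star : ∀ (x : X) (f : Z → ℂ), Continuous f → HasCompactSupport f →
      π x (fun z => (starRingEnd ℂ) (f z)) = ContinuousLinearMap.adjoint (π x f))
    (hπ_nondeg : ∀ x : X, Dense
      (Submodule.span ℂ {w : H | ∃ g : Z → ℂ,
        (Continuous g ∧ HasCompactSupport g) ∧ ∃ v : H, w = π x g v} : Set H))
    (hπ_cont : ∀ g : Z → ℂ, Continuous g → HasCompactSupport g →
      ∀ v : H, Continuous fun x : X => π x g v) :
    ∃ (n : ℕ) (ψ : Fin n → Z → ℂ) (u : Fin n → X → ℝ) (ζ : Fin n → H),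
      (∀ i, Continuous (ψ i)) ∧ (∀ i, HasCompactSupport (ψ i)) ∧
      (∀ i, Continuous (u i)) ∧
      ∀ x : X, (3 / 4 : ℝ) ≤ ‖∑ i, (u i x : ℂ) • π x (ψ i) (ζ i)‖ := by
  obtain ⟨n, ψ, u, ζ, h⟩ := exists_uniformly_nonvanishing_section_general
    (fun x (g : {g : Z → ℂ // Continuous g ∧ HasCompactSupport g}) => (π x g).toLinearMap)
    (fun g => hπ_cont g g.2.1 g.2.2) (fun x => (hπ_nondeg x).mono <| Submodule.span_le.2 <| by
      rintro _ ⟨g, hg, v, rfl⟩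
      exact Submodule.mem_iSup_of_mem ⟨g, hg⟩ ⟨v, rfl⟩) (3 / 4)
  exact ⟨n, fun i => ψ i, fun i => u i, ζ, fun i => (ψ i).2.1, fun i => (ψ i).2.2,
    fun i => (u i).continuous, h⟩
end

section
/- Let c and c' be two cut-off functions (each compactly supported, continuous, [0,1]-valued, with ∑_γ c(zγ)² = 1 and ∑_γ c'(zγ)² = 1 for all z), let e be the Mishchenko projection built from c, and assume the nondegeneracy summation condition along c': for every x ∈ X and v ∈ H the family (π_x((γ·c')²)v)_{γ∈Γ} is unconditionally summable with sum v. Define φ_{c'←c}(ξ̂)(x,γ) = π_x(c')(𝒫^c ξ̂(x,γ)), where 𝒫^c ξ̂(x,γ) = ∑_{μ∈Γ} π_x(μ·c)(U_μ(ξ̂(μ⁻¹x, μ⁻¹γ))), and symmetrically φ_{c←c'}. Then for every ξ̂ ∈ C_c(X×Γ, H) and every (x,γ), the family (π_x(c)(π_x(μ·c')(U_μ(π_{μ⁻¹x}(c')(𝒫^c ξ̂(μ⁻¹x, μ⁻¹γ))))))_{μ∈Γ} is summable with sum ((π⋊Γ)(e)ξ̂)(x,γ) = ∑_{ν∈Γ}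 π_x(c·(ν·c))(U_ν(ξ̂(ν⁻¹x, ν⁻¹γ))); that is, φ_{c←c'} ∘ φ_{c'←c} = (π⋊Γ)(e) on C_c(X×Γ, H), so the identification of the Connes–Skandalis module with the range of the Mishchenko projection is independent of the choice of cut-off function. -/
/-!
Write `v = 𝒫^c ξ̂(x,γ)`. The map `𝒫^c ξ̂` is `Γ`-equivariant, so equivariance of `π` turns the
`μ`-th term of `𝒫^{c'}(φ_{c'←c} ξ̂)(x,γ)` into `π_x((μ·c')²) v`. Nondegeneracy along `c'` sums these
terms to `v`, and multiplicativity of `π_x` gives `π_x(c) v = ((π⋊Γ)(e)ξ̂)(x,γ)`.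
-/

/-- Membership of a function in `C_c(Z, E)`, kept as a predicate because the representations
`π x` are defined on all functions `Z → ℂ`. -/
structure MemCc {Z E : Type*} [TopologicalSpace Z] [TopologicalSpace E] [Zero E] (f : Z → E) :
    Prop where
  continuous : Continuous f
  hasCompactSupport : HasCompactSupport f

/-- The map `(z, γ) ↦ ρ z γ` is a right action of the discrete group `Γ` on `Z` by continuous
maps. -/
structure IsContinuousRightAction {Γ Z : Type*} [Group Γ] [TopologicalSpace Z]
    (ρ : Z → Γ → Z) : Prop where
  apply_one : ∀ z, ρ z 1 = z
  apply_apply : ∀ (z : Z) (γ μ : Γ), ρ (ρ z γ) μ = ρ z (γ * μ)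
  continuous : ∀ γ : Γ, Continuous fun z => ρ z γ

/-- The equivariance `π_{γx}(f) = U_γ ∘ π_x(γ⁻¹·f) ∘ U_γ⁻¹` of a family of representations,
required only for `f ∈ C_c(Z)`. -/
def IsEquivariantOnCc {Γ X Z H : Type*} [Group Γ] [MulAction Γ X] [TopologicalSpace Z]
    [NormedAddCommGroup H] [InnerProductSpace ℂ H]
    (π : X → (Z → ℂ) → (H →L[ℂ] H)) (U : Γ →* (H ≃ₗᵢ[ℂ] H)) (ρ : Z → Γ → Z) : Prop :=
  ∀ (γ : Γ) (x : X) (f : Z → ℂ), MemCc f → ∀ v : H,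
    π (γ • x) f v = U γ (π x (fun z => f (ρ z γ⁻¹)) (U γ⁻¹ v))

/-- The map `φ_{c'←c}(ξ̂)(x,γ) = π_x(c')(𝒫^c ξ̂(x,γ))` comparing the identifications built from
`c` and from `c'`; the source cut-off function `c` is the first argument. -/
noncomputable def cutoffTransition {Γ X Z H : Type*} [Group Γ] [MulAction Γ X]
    [NormedAddCommGroup H] [InnerProductSpace ℂ H]
    (π : X → (Z → ℂ) → (H →L[ℂ] H)) (U : Γ →* (H ≃ₗᵢ[ℂ] H))
    (ρ : Z → Γ → Z) (c c' : Z → ℝ) (ξ : X → Γ → H) (x : X) (γ : Γ) : H :=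
  π x (fun z => (c' z : ℂ)) (avgP π U ρ c ξ x γ)

theorem MemCc.ofReal {Z : Type*} [TopologicalSpace Z] {c : Z → ℝ} (hc : MemCc c) :
    MemCc fun z => (c z : ℂ) where
  continuous := Complex.continuous_ofReal.comp hc.continuous
  hasCompactSupport := hc.hasCompactSupport.comp_left (g := ((↑) : ℝ → ℂ)) Complex.ofReal_zero

namespace IsContinuousRightAction

variable {Γ Z : Type*} [Group Γ] [TopologicalSpace Z] {ρ : Z → Γ → Z}

/-- Translation by `γ` as a homeomorphism, with inverse the translation by `γ⁻¹`. -/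
def homeomorph (hρ : IsContinuousRightAction ρ) (γ : Γ) : Z ≃ₜ Z where
  toFun z := ρ z γ
  invFun z := ρ z γ⁻¹
  left_inv z := by simp only [hρ.apply_apply, mul_inv_cancel, hρ.apply_one]
  right_inv z := by simp only [hρ.apply_apply, inv_mul_cancel, hρ.apply_one]
  continuous_toFun := hρ.continuous γ
  continuous_invFun := hρ.continuous γ⁻¹

theorem memCc_translate {E : Type*} [TopologicalSpace E] [Zero E]
    (hρ : IsContinuousRightAction ρ) {f : Z → E} (hf : MemCc f) (γ : Γ) :
    MemCc fun z => f (ρ z γ) where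
  continuous := hf.continuous.comp (hρ.continuous γ)
  hasCompactSupport := hf.hasCompactSupport.comp_homeomorph (hρ.homeomorph γ)

end IsContinuousRightAction

section

variable {Γ X Z H : Type*} [Group Γ] [MulAction Γ X]
  [NormedAddCommGroup H] [InnerProductSpace ℂ H]
  {π : X → (Z → ℂ) → (H →L[ℂ] H)} {U : Γ →* (H ≃ₗᵢ[ℂ] H)} {ρ : Z → Γ → Z}
  {c c' : Z → ℝ} {ξ : X → Γ → H}

theorem summable_avgP_of_eq_zero_off_finset (F : Finset Γ)
    (hξ : ∀ (x : X) (γ : Γ), γ ∉ F → ξ x γ = 0) (x : X) (γ : Γ) :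
    Summable fun μ : Γ => π x (fun z => (c (ρ z μ) : ℂ)) (U μ (ξ (μ⁻¹ • x) (μ⁻¹ * γ))) := by
  classical
  refine summable_of_ne_finset_zero (s := F.image fun δ => γ * δ⁻¹) fun μ hμ => ?_
  have hμF : μ⁻¹ * γ ∉ F := fun h => hμ (Finset.mem_image.2 ⟨_, h, by group⟩)
  rw [hξ _ _ hμF, map_zero, map_zero]

variable [TopologicalSpace Z]

theorem unitary_apply_of_isEquivariantOnCc (hρ : IsContinuousRightAction ρ)
    (hπ : IsEquivariantOnCc π U ρ) {f : Z → ℂ} (hf : MemCc f) (μ : Γ) (x : X) (v : H) :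
    U μ (π (μ⁻¹ • x) f v) = π x (fun z => f (ρ z μ)) (U μ v) := by
  have hUv : U μ⁻¹ (U μ v) = v := by
    rw [map_inv]
    exact (U μ).symm_apply_apply v
  simpa only [smul_inv_smul, hρ.apply_apply, inv_mul_cancel, hρ.apply_one, hUv] using
    (hπ μ (μ⁻¹ • x) (fun z => f (ρ z μ)) (hρ.memCc_translate hf μ) (U μ v)).symm

theorem unitary_apply_avgP (hρ : IsContinuousRightAction ρ) (hπ : IsEquivariantOnCc π U ρ)
    (hc : MemCc c) (ξ : X → Γ → H) (μ : Γ) (x : X) (γ : Γ) :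
    U μ (avgP π U ρ c ξ (μ⁻¹ • x) (μ⁻¹ * γ)) = avgP π U ρ c ξ x γ := by
  have term_eq (ν : Γ) :
      U μ (π (μ⁻¹ • x) (fun z => (c (ρ z ν) : ℂ))
        (U ν (ξ (ν⁻¹ • μ⁻¹ • x) (ν⁻¹ * (μ⁻¹ * γ))))) =
      π x (fun z => (c (ρ z (μ * ν)) : ℂ))
        (U (μ * ν) (ξ ((μ * ν)⁻¹ • x) ((μ * ν)⁻¹ * γ))) := by
    rw [unitary_apply_of_isEquivariantOnCc hρ hπ (hρ.memCc_translate hc.ofReal ν)]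
    simp only [hρ.apply_apply, map_mul, LinearIsometryEquiv.coe_mul, Function.comp_apply,
      mul_inv_rev, mul_smul, mul_assoc]
  calc U μ (avgP π U ρ c ξ (μ⁻¹ • x) (μ⁻¹ * γ))
      = ∑' ν : Γ, U μ (π (μ⁻¹ • x) (fun z => (c (ρ z ν) : ℂ))
          (U ν (ξ (ν⁻¹ • μ⁻¹ • x) (ν⁻¹ * (μ⁻¹ * γ))))) :=
        (U μ).toContinuousLinearEquiv.map_tsum
    _ = ∑' ν : Γ, π x (fun z => (c (ρ z (μ * ν)) : ℂ))
          (U (μ * ν) (ξ ((μ * ν)⁻¹ • x) ((μ * ν)⁻¹ * γ))) := tsum_congr term_eq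
    _ = avgP π U ρ c ξ x γ := (Equiv.mulLeft μ).tsum_eq
        fun ν => π x (fun z => (c (ρ z ν) : ℂ)) (U ν (ξ (ν⁻¹ • x) (ν⁻¹ * γ)))

theorem unitary_apply_cutoffTransition (hρ : IsContinuousRightAction ρ)
    (hπ : IsEquivariantOnCc π U ρ) (hc : MemCc c) (hc' : MemCc c') (ξ : X → Γ → H)
    (μ : Γ) (x : X) (γ : Γ) :
    U μ (cutoffTransition π U ρ c c' ξ (μ⁻¹ • x) (μ⁻¹ * γ)) =
      π x (fun z => (c' (ρ z μ) : ℂ)) (avgP π U ρ c ξ x γ) := by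
  rw [cutoffTransition, unitary_apply_of_isEquivariantOnCc hρ hπ hc'.ofReal,
    unitary_apply_avgP hρ hπ hc]

theorem hasSum_avgP_cutoffTransition (hρ : IsContinuousRightAction ρ)
    (hπ : IsEquivariantOnCc π U ρ) (hc : MemCc c) (hc' : MemCc c') (ξ : X → Γ → H)
    (x : X) (γ : Γ)
    (hmul : ∀ f g : Z → ℂ, MemCc f → MemCc g → π x (f * g) = (π x f).comp (π x g))
    (hsum : ∀ v : H, HasSum (fun μ : Γ => π x (fun z => (c' (ρ z μ) : ℂ) ^ 2) v) v) :
    HasSum (fun μ : Γ => π x (fun z => (c' (ρ z μ) : ℂ))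
        (U μ (cutoffTransition π U ρ c c' ξ (μ⁻¹ • x) (μ⁻¹ * γ))))
      (avgP π U ρ c ξ x γ) := by
  convert hsum (avgP π U ρ c ξ x γ) using 2 with μ
  have hc'μ : MemCc fun z => (c' (ρ z μ) : ℂ) := hρ.memCc_translate hc'.ofReal μ
  rw [unitary_apply_cutoffTransition hρ hπ hc hc', ← ContinuousLinearMap.comp_apply,
    ← hmul _ _ hc'μ hc'μ, ← pow_two]
  rfl

theorem apply_avgP_eq_mishAct (hρ : IsContinuousRightAction ρ) (hc : MemCc c) (x : X) (γ : Γ)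
    (hmul : ∀ f g : Z → ℂ, MemCc f → MemCc g → π x (f * g) = (π x f).comp (π x g))
    (hξ : Summable fun μ : Γ =>
      π x (fun z => (c (ρ z μ) : ℂ)) (U μ (ξ (μ⁻¹ • x) (μ⁻¹ * γ)))) :
    π x (fun z => (c z : ℂ)) (avgP π U ρ c ξ x γ) = mishAct π U ρ c ξ x γ := by
  rw [avgP, ContinuousLinearMap.map_tsum _ hξ]
  refine tsum_congr fun μ => ?_
  rw [← ContinuousLinearMap.comp_apply, ← hmul _ _ hc.ofReal (hρ.memCc_translate hc.ofReal μ)]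
  rfl

theorem cutoff_independence_of_mishchenko_identification_general
    (hρ : IsContinuousRightAction ρ) (hπ : IsEquivariantOnCc π U ρ)
    (hc : MemCc c) (hc' : MemCc c') (x : X) (γ : Γ)
    (hmul : ∀ f g : Z → ℂ, MemCc f → MemCc g → π x (f * g) = (π x f).comp (π x g))
    (hsum : ∀ v : H, HasSum (fun μ : Γ => π x (fun z => (c' (ρ z μ) : ℂ) ^ 2) v) v)
    (hξ : Summable fun μ : Γ =>
      π x (fun z => (c (ρ z μ) : ℂ)) (U μ (ξ (μ⁻¹ • x) (μ⁻¹ * γ)))) :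
    HasSum (fun μ : Γ => π x (fun z => (c z : ℂ)) (π x (fun z => (c' (ρ z μ) : ℂ))
        (U μ (cutoffTransition π U ρ c c' ξ (μ⁻¹ • x) (μ⁻¹ * γ)))))
      (mishAct π U ρ c ξ x γ) ∧
    cutoffTransition π U ρ c' c (cutoffTransition π U ρ c c' ξ) x γ =
      mishAct π U ρ c ξ x γ := by
  have havg := hasSum_avgP_cutoffTransition hρ hπ hc hc' ξ x γ hmul hsum
  rw [← apply_avgP_eq_mishAct hρ hc x γ hmul hξ]
  exact ⟨havg.mapL _, congrArg (π x fun z => (c z : ℂ)) havg.tsum_eq⟩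

end

/-- Independence of the choice of cut-off function: with
`φ_{c'←c}(ξ̂)(x,γ) = π_x(c')(𝒫^c ξ̂(x,γ))` and symmetrically `φ_{c←c'}`, one has
`φ_{c←c'} ∘ φ_{c'←c} = (π⋊Γ)(e)` on `C_c(X×Γ, H)`, where `e` is the Mishchenko
projection built from `c`; the relevant families are summable with sum
`((π⋊Γ)(e)ξ̂)(x,γ)`. -/
theorem cutoff_independence_of_mishchenko_identification
    {Γ : Type*} [Group Γ]
    {Z : Type*} [TopologicalSpace Z] [LocallyCompactSpace Z] [T2Space Z]
    {X : Type*} [TopologicalSpace X] [CompactSpace X] [T2Space X] [MulAction Γ X]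
    {H : Type*} [NormedAddCommGroup H] [InnerProductSpace ℂ H] [CompleteSpace H]
    (ρ : Z → Γ → Z)
    (hρ_one : ∀ z, ρ z 1 = z)
    (hρ_mul : ∀ (z : Z) (γ μ : Γ), ρ (ρ z γ) μ = ρ z (γ * μ))
    (hρ_cont : ∀ γ : Γ, Continuous fun z => ρ z γ)
    (hρ_proper : ∀ K L : Set Z, IsCompact K → IsCompact L →
      {γ : Γ | ∃ z ∈ K, ρ z γ ∈ L}.Finite)
    (hX_cont : ∀ γ : Γ, Continuous fun x : X => γ • x)
    (c : Z → ℝ) (hc_cont : Continuous c) (hc_supp : HasCompactSupport c)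
    (hc_mem : ∀ z, c z ∈ Set.Icc (0 : ℝ) 1)
    (hc_sum : ∀ z, HasSum (fun γ : Γ => c (ρ z γ) ^ 2) 1)
    (c' : Z → ℝ) (hc'_cont : Continuous c') (hc'_supp : HasCompactSupport c')
    (hc'_mem : ∀ z, c' z ∈ Set.Icc (0 : ℝ) 1)
    (hc'_sum : ∀ z, HasSum (fun γ : Γ => c' (ρ z γ) ^ 2) 1)
    (U : Γ →* (H ≃ₗᵢ[ℂ] H))
    (π : X → (Z → ℂ) → (H →L[ℂ] H))
    (hπ_add : ∀ (x : X) (f g : Z → ℂ), Continuous f → HasCompactSupport f →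
      Continuous g → HasCompactSupport g → π x (f + g) = π x f + π x g)
    (hπ_mul : ∀ (x : X) (f g : Z → ℂ), Continuous f → HasCompactSupport f →
      Continuous g → HasCompactSupport g → π x (f * g) = (π x f).comp (π x g))
    (hπ_star : ∀ (x : X) (f : Z → ℂ), Continuous f → HasCompactSupport f →
      π x (fun z => (starRingEnd ℂ) (f z)) = ContinuousLinearMap.adjoint (π x f))
    (hπ_equiv : ∀ (γ : Γ) (x : X) (f : Z → ℂ) (v : H),
      π (γ • x) f v = U γ (π x (fun z => f (ρ z γ⁻¹)) (U γ⁻¹ v)))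
    (hπ_sum' : ∀ (x : X) (v : H),
      HasSum (fun γ : Γ => π x (fun z => (c' (ρ z γ) : ℂ) ^ 2) v) v) :
    ∀ (ξ : X → Γ → H) (F : Finset Γ),
      (∀ (x : X) (γ : Γ), γ ∉ F → ξ x γ = 0) →
      (∀ γ : Γ, Continuous fun x => ξ x γ) →
      ∀ (x : X) (γ : Γ),
        HasSum (fun μ : Γ =>
            π x (fun z => (c z : ℂ))
              (π x (fun z => (c' (ρ z μ) : ℂ))
                (U μ (π (μ⁻¹ • x) (fun z => (c' z : ℂ))
                  (avgP π U ρ c ξ (μ⁻¹ • x) (μ⁻¹ * γ))))))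
          (mishAct π U ρ c ξ x γ) ∧
        π x (fun z => (c z : ℂ))
            (avgP π U ρ c'
              (fun x' γ' => π x' (fun z => (c' z : ℂ)) (avgP π U ρ c ξ x' γ')) x γ) =
          mishAct π U ρ c ξ x γ := by
  intro ξ F hξ _ x γ
  exact cutoff_independence_of_mishchenko_identification_general ⟨hρ_one, hρ_mul, hρ_cont⟩
    (fun γ x f _ => hπ_equiv γ x f) ⟨hc_cont, hc_supp⟩ ⟨hc'_cont, hc'_supp⟩ x γ
    (fun f g hf hg => hπ_mul x f g hf.1 hf.2 hg.1 hg.2) (hπ_sum' x)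
    (summable_avgP_of_eq_zero_off_finset F hξ x γ)
end
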